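/- Let C > 0, S̄ > 0, J ≥ 1 and N > 0 be real numbers with N > S̄·J·e^J. Then the full-duplex feedback load is strictly smaller than the half-duplex feedback load: C·(J·S̄ + S̄·ln(J·N/S̄)) < 2·C·S̄·ln(N/S̄). -/

import Mathlib

open Real

/-- The full-duplex feedback load is strictly smaller than the half-duplex feedback load:
if `C > 0`, `S̄ > 0`, `J ≥ 1` and `N > S̄·J·e^J`, then
`C·(J·S̄ + S̄·ln(J·N/S̄)) < 2·C·S̄·ln(N/S̄)`. -/
theorem fd_feedback_load_lt_hd
    (C S J N : ℝ) (hC : 0 < C) (hS : 0 < S) (hJ : 1 ≤ J)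
    (hN : S * J * Real.exp J < N) :
    C * (J * S + S * Real.log (J * N / S)) < 2 * C * S * Real.log (N / S) := by
  have hJ0 : 0 < J := by linarith
  have hN0 : 0 < N := lt_trans (by positivity) hN
  -- Taking logarithms in `J * exp J < N / S` gives the whole content of the inequality:
  -- after division by `C * S`, the claim is `J + log J + log (N / S) < 2 * log (N / S)`.
  have key : Real.log J + J < Real.log (N / S) := by
    have h1 : J * Real.exp J < N / S := by
      rw [lt_div_iff₀ hS]
      linarith
    have h2 := Real.log_lt_log (by positivity) h1
    rwa [Real.log_mul hJ0.ne' (Real.exp_pos J).ne', Real.log_exp] at h2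
  have hsplit : Real.log (J * N / S) = Real.log J + Real.log (N / S) := by
    rw [mul_div_assoc, Real.log_mul hJ0.ne' (by positivity)]
  rw [hsplit]
  have h3 := mul_lt_mul_of_pos_left key (mul_pos hC hS)
  linarith
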